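/- Let R be a unital ring such that every simple left R-module is injective (i.e., R is a left V-ring). Then every proper left ideal I of R is the intersection of the maximal left ideals of R containing I. -/

import Mathlib

universe u

/-- A module `Q` is injective if every `R`-linear map into `Q` extends along every
injective `R`-linear map. -/
def IsInjectiveModule (R : Type u) [Ring R] (Q : Type u) [AddCommGroup Q]
    [Module R Q] : Prop :=
  ∀ (M N : Type u) [AddCommGroup M] [AddCommGroup N] [Module R M] [Module R N]
    (f : M →ₗ[R] N), Function.Injective f →
      ∀ g : M →ₗ[R] Q, ∃ h : N →ₗ[R] Q, ∀ m : M, h (f m) = g m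

/-!
Let `x ∉ N` in a left module `M` over a left V-ring, and pass to the nonzero class of `x` in
`M ⧸ N`. Its annihilator lies in a maximal left ideal `m`, so the cyclic submodule it generates
maps onto the simple module `R ⧸ m`. By injectivity this map extends to `M ⧸ N`, and the kernel of
the composite `M → M ⧸ N → R ⧸ m` is a maximal submodule containing `N` but not `x`.
-/

open Submodule

/-- `IsInjectiveModule` only tests modules in the universe of `R`; Baer's criterion gives extensions
of linear maps between modules in arbitrary universes. -/
theorem IsInjectiveModule.baer {R Q : Type u} [Ring R] [AddCommGroup Q] [Module R Q]
    (hQ : IsInjectiveModule R Q) : Module.Baer R Q := fun I g ↦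
  have ⟨h, hg⟩ := hQ I R I.subtype I.injective_subtype g
  ⟨h, fun x hx ↦ hg ⟨x, hx⟩⟩

section

variable {R M : Type*} [Ring R] [AddCommGroup M] [Module R M]

theorem exists_linearMap_apply_eq_of_torsionOf_le {Q : Type*} [AddCommGroup Q] [Module R Q]
    (hQ : Module.Baer R Q) {x : M} {y : Q} (hxy : Ideal.torsionOf R M x ≤ Ideal.torsionOf R Q y) :
    ∃ f : M →ₗ[R] Q, f x = y := by
  let i : (R ⧸ Ideal.torsionOf R M x) →ₗ[R] M :=
    (Ideal.torsionOf R M x).liftQ (LinearMap.toSpanSingleton R M x) le_rfl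
  let g : (R ⧸ Ideal.torsionOf R M x) →ₗ[R] Q :=
    (Ideal.torsionOf R M x).liftQ (LinearMap.toSpanSingleton R Q y) hxy
  have hi : Function.Injective i := LinearMap.ker_eq_bot.mp (ker_liftQ_eq_bot _ _ _ le_rfl)
  obtain ⟨f, hf⟩ := hQ.extension_property i hi g
  have i_one : i (mkQ _ 1) = x := one_smul R x
  have g_one : g (mkQ _ 1) = y := one_smul R y
  exact ⟨f, by rw [← i_one, ← g_one, ← hf, LinearMap.comp_apply]⟩

theorem exists_linearMap_quotient_maximal_apply_ne_zero
    (hR : ∀ m : Ideal R, m.IsMaximal → Module.Baer R (R ⧸ m)) {x : M} (hx : x ≠ 0) :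
    ∃ m : Ideal R, m.IsMaximal ∧ ∃ f : M →ₗ[R] R ⧸ m, f x ≠ 0 := by
  obtain ⟨m, hm, hxm⟩ := (Ideal.torsionOf R M x).exists_le_maximal
    ((Ideal.torsionOf_eq_top_iff R x).not.mpr hx)
  have torsionOf_one : Ideal.torsionOf R (R ⧸ m) (m.mkQ 1) = m := by
    ext a
    rw [Ideal.mem_torsionOf_iff, ← map_smul, smul_eq_mul, mul_one, mkQ_apply, Quotient.mk_eq_zero]
  obtain ⟨f, hf⟩ := exists_linearMap_apply_eq_of_torsionOf_le (hR m hm)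
    (hxm.trans_eq torsionOf_one.symm)
  refine ⟨m, hm, f, fun hfx ↦ hm.ne_top ?_⟩
  rwa [← torsionOf_one, Ideal.torsionOf_eq_top_iff, ← hf]

theorem exists_le_isCoatom_notMem (hR : ∀ m : Ideal R, m.IsMaximal → Module.Baer R (R ⧸ m))
    {N : Submodule R M} {x : M} (hx : x ∉ N) : ∃ K, N ≤ K ∧ IsCoatom K ∧ x ∉ K := by
  have mk_ne_zero : N.mkQ x ≠ 0 := (Quotient.mk_eq_zero N).not.mpr hx
  obtain ⟨m, hm, f, hf⟩ := exists_linearMap_quotient_maximal_apply_ne_zero hR mk_ne_zero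
  have : IsSimpleModule R (R ⧸ m) := isSimpleModule_iff_isCoatom.mpr hm.out
  have comp_ne_zero : f ∘ₗ N.mkQ ≠ 0 := fun h ↦ hf (LinearMap.congr_fun h x)
  have le_ker : N ≤ LinearMap.ker (f ∘ₗ N.mkQ) :=
    N.ker_mkQ.ge.trans (LinearMap.ker_le_ker_comp _ _)
  have isCoatom_ker : IsCoatom (LinearMap.ker (f ∘ₗ N.mkQ)) :=
    LinearMap.isCoatom_ker_of_surjective (LinearMap.surjective_of_ne_zero comp_ne_zero)
  exact ⟨_, le_ker, isCoatom_ker, hf⟩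

end

theorem stmt_14_general {R : Type u} [Ring R]
    (hV : ∀ (S : Type u) [AddCommGroup S] [Module R S], IsSimpleModule R S →
      IsInjectiveModule R S)
    {M : Type*} [AddCommGroup M] [Module R M] (N : Submodule R M) :
    N = sInf {K : Submodule R M | N ≤ K ∧ IsCoatom K} := by
  have baer_quotient (m : Ideal R) (hm : m.IsMaximal) : Module.Baer R (R ⧸ m) :=
    (hV (R ⧸ m) (isSimpleModule_iff_isCoatom.mpr hm.out)).baer
  refine le_antisymm (le_sInf fun K hK ↦ hK.1) fun x hx ↦ ?_
  by_contra hxN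
  obtain ⟨K, hNK, hK, hxK⟩ := exists_le_isCoatom_notMem baer_quotient hxN
  exact hxK (mem_sInf.mp hx K ⟨hNK, hK⟩)

/-- Villamayor's theorem: if every simple left `R`-module is injective (`R` is a left
V-ring), then every proper left ideal of `R` is the intersection of the maximal left
ideals containing it.  Left ideals are formalized as `R`-submodules of `R`; maximal
left ideals are the coatoms of the lattice of left ideals. -/
theorem stmt_14 {R : Type u} [Ring R]
    (hV : ∀ (S : Type u) [AddCommGroup S] [Module R S], IsSimpleModule R S →
      IsInjectiveModule R S) :
    ∀ I : Submodule R R, I ≠ ⊤ →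
      I = sInf {M : Submodule R R | I ≤ M ∧ IsCoatom M} := by
  exact fun I _ ↦ stmt_14_general hV I
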